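/- arXiv:1808.01670 — 4 statements merged into one kernel-verified Lean document; each statement's English description precedes it below -/
import Mathlib

section
/- (Residuation) In a lattice effect algebra E, the Sasaki product is a residuated map whose residual is the Sasaki arrow: for all a,b,c ∈ E, a⊗c ≤ b if and only if c ≤ a→ₛb. -/
/-- A lattice effect algebra: an effect algebra (partial operation encoded by a
definedness predicate `D` and a total function `add` whose value is only
meaningful on `D`) whose induced order `a ≤ b ↔ ∃ c, a⊕c = b` is a lattice;
the carrier's lattice order is required to coincide with the induced order. -/
structure LatticeEffectAlgebra (E : Type*) [Lattice E] [BoundedOrder E] where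
  D : E → E → Prop
  add : E → E → E
  comm : ∀ a b : E, D a b → (D b a ∧ add a b = add b a)
  assoc : ∀ a b c : E, D b c → D a (add b c) →
    (D a b ∧ D (add a b) c ∧ add a (add b c) = add (add a b) c)
  inv : E → E
  D_inv : ∀ a : E, D a (inv a)
  add_inv : ∀ a : E, add a (inv a) = ⊤
  inv_unique : ∀ a b : E, D a b → add a b = ⊤ → b = inv a
  D_top : ∀ a : E, D a ⊤ → a = ⊥
  le_iff : ∀ a b : E, a ≤ b ↔ ∃ c, D a c ∧ add a c = b

variable {E : Type*} [Lattice E] [BoundedOrder E]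

/-- Sasaki product: a⊗b = (a'⊕(a∧b'))'. -/
def LatticeEffectAlgebra.sprod (A : LatticeEffectAlgebra E) (a b : E) : E :=
  A.inv (A.add (A.inv a) (a ⊓ A.inv b))

/-- Sasaki arrow: a→ₛb = a'⊕(a∧b). -/
def LatticeEffectAlgebra.sarrow (A : LatticeEffectAlgebra E) (a b : E) : E :=
  A.add (A.inv a) (a ⊓ b)

namespace LatticeEffectAlgebra

theorem aux_inv_inv (A : LatticeEffectAlgebra E) (a : E) : A.inv (A.inv a) = a := by
  obtain ⟨h1, h2⟩ := A.comm _ _ (A.D_inv a)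
  exact (A.inv_unique _ _ h1 (by rw [← h2, A.add_inv])).symm

theorem aux_compl (A : LatticeEffectAlgebra E) {a x y : E} (hd : A.D x y)
    (h : A.add x y = a) : A.D (A.inv a) x ∧ y = A.inv (A.add (A.inv a) x) := by
  obtain ⟨h1, h2⟩ := A.comm _ _ (A.D_inv a)
  rw [A.add_inv] at h2
  subst h
  obtain ⟨h3, h4, h5⟩ := A.assoc _ _ _ hd h1
  exact ⟨h3, A.inv_unique _ _ h4 (by rw [← h5, ← h2])⟩

theorem aux_anti (A : LatticeEffectAlgebra E) {a b : E} (h : a ≤ b) : A.inv b ≤ A.inv a := by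
  obtain ⟨c, hd, h⟩ := (A.le_iff _ _).1 h
  obtain ⟨h1, h2⟩ := A.comm _ _ hd
  obtain ⟨h3, h4⟩ := A.aux_compl h1 (h2.symm.trans h)
  refine (A.le_iff _ _).2 ⟨c, h3, ?_⟩
  rw [h4, aux_inv_inv]

theorem aux_D (A : LatticeEffectAlgebra E) {a x : E} (h : x ≤ a) : A.D (A.inv a) x := by
  obtain ⟨c, hd, h⟩ := (A.le_iff _ _).1 h
  exact (A.aux_compl hd h).1

theorem aux_mono (A : LatticeEffectAlgebra E) {x y z : E} (h : x ≤ y) (hd : A.D z y) :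
    A.add z x ≤ A.add z y := by
  obtain ⟨c, hc, rfl⟩ := (A.le_iff _ _).1 h
  obtain ⟨_, h4, h5⟩ := A.assoc _ _ _ hc hd
  exact (A.le_iff _ _).2 ⟨c, h4, h5.symm⟩

theorem aux_sprod_mono (A : LatticeEffectAlgebra E) {a c d : E} (h : c ≤ d) :
    A.sprod a c ≤ A.sprod a d :=
  A.aux_anti (A.aux_mono (inf_le_inf_left a (A.aux_anti h)) (A.aux_D inf_le_left))

theorem aux_key (A : LatticeEffectAlgebra E) (a b : E) :
    A.sprod a (A.sarrow a b) ≤ b := by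
  obtain ⟨y, hd, h⟩ := (A.le_iff (a ⊓ b) a).1 inf_le_left
  obtain ⟨_, h4⟩ := A.aux_compl hd h
  obtain ⟨h1, h2⟩ := A.comm _ _ hd
  rw [h] at h2
  obtain ⟨_, h6⟩ := A.aux_compl h1 h2.symm
  have hy : y ≤ a := (A.le_iff _ _).2 ⟨_, h1, h2.symm⟩
  unfold sprod sarrow
  rw [← h4, inf_eq_right.2 hy, ← h6]
  exact inf_le_right

theorem aux_dir (A : LatticeEffectAlgebra E) {a b c : E} (h : c ≤ A.sarrow a b) :
    A.sprod a c ≤ b :=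
  (A.aux_sprod_mono h).trans (A.aux_key a b)

end LatticeEffectAlgebra

/-- (Residuation) In a lattice effect algebra the Sasaki product is a
residuated map whose residual is the Sasaki arrow. -/
theorem sprod_residuated (A : LatticeEffectAlgebra E) (a b c : E) :
    A.sprod a c ≤ b ↔ c ≤ A.sarrow a b := by
  refine ⟨fun h => ?_, A.aux_dir⟩
  have h1 := A.aux_anti h
  unfold LatticeEffectAlgebra.sprod at h1
  rw [A.aux_inv_inv] at h1
  have h2 := A.aux_anti (A.aux_dir (b := A.inv c) h1)
  unfold LatticeEffectAlgebra.sprod at h2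
  rwa [A.aux_inv_inv, A.aux_inv_inv, A.aux_inv_inv] at h2
end

section
/- (Divisibility law) In a lattice effect algebra E, for all a,b,c ∈ E: if c ≤ a and c ≤ b, then c ≤ a⊗(a→ₛb). -/
variable {E : Type*} [Lattice E] [BoundedOrder E]

theorem LatticeEffectAlgebra.inv_aux (A : LatticeEffectAlgebra E) (a m d : E)
    (h : A.D m d) (e : A.add m d = a) : A.inv (A.add (A.inv a) m) = d := by
  obtain ⟨h1, h2⟩ := A.comm _ _ (A.D_inv a)
  rw [A.add_inv] at h2
  have h3 : A.D (A.inv a) (A.add m d) := by rw [e]; exact h1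
  obtain ⟨_, h5, h6⟩ := A.assoc _ _ _ h h3
  rw [e] at h6
  exact (A.inv_unique _ _ h5 (h6.symm.trans h2.symm)).symm

/-- (Divisibility law) In a lattice effect algebra, if c ≤ a and c ≤ b then
c ≤ a⊗(a→ₛb). -/
theorem divisibility (A : LatticeEffectAlgebra E) (a b c : E)
    (h1 : c ≤ a) (h2 : c ≤ b) : c ≤ A.sprod a (A.sarrow a b) := by
  obtain ⟨d, hd, e⟩ := (A.le_iff (a ⊓ b) a).1 inf_le_left
  obtain ⟨hd', e'⟩ := A.comm _ _ hd
  have e2 : A.add d (a ⊓ b) = a := e'.symm.trans e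
  have hda : d ≤ a := (A.le_iff d a).2 ⟨_, hd', e2⟩
  unfold LatticeEffectAlgebra.sprod LatticeEffectAlgebra.sarrow
  rw [A.inv_aux a _ d hd e, inf_eq_right.2 hda, A.inv_aux a d _ hd' e2]
  exact le_inf h1 h2
end

section
/- (Self-adjointness law) In a lattice effect algebra E, for all a,b,c ∈ E: if a⊗b ≤ c' then a⊗c ≤ b'. -/
variable {E : Type*} [Lattice E] [BoundedOrder E]

theorem LEA_cancel (A : LatticeEffectAlgebra E) (a b c : E) (h1 : A.D a c) (h2 : A.D b c)
    (h : A.add a c = A.add b c) : a = b := by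
  have key : ∀ x : E, A.D x c → x = A.inv (A.add (A.inv (A.add x c)) c) := by
    intro x hx
    obtain ⟨h3, h4⟩ := A.comm _ _ hx
    obtain ⟨h5, h6⟩ := A.comm _ _ (A.D_inv (A.add x c))
    rw [A.add_inv] at h6
    have h7 : A.D (A.inv (A.add x c)) (A.add c x) := by rw [← h4]; exact h5
    obtain ⟨_, h8, h9⟩ := A.assoc _ _ _ h3 h7
    apply A.inv_unique _ _ h8
    rw [← h9, ← h4, ← h6]
  rw [key a h1, key b h2, h]

theorem LEA_key (A : LatticeEffectAlgebra E) (a m : E) (h : m ≤ a) :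
    A.D m (A.inv (A.add (A.inv a) m)) ∧ A.add m (A.inv (A.add (A.inv a) m)) = a := by
  obtain ⟨d, hd, he⟩ := (A.le_iff m a).1 h
  obtain ⟨h5, h6⟩ := A.comm _ _ (A.D_inv a)
  rw [A.add_inv] at h6
  obtain ⟨_, h8, h9⟩ := A.assoc (A.inv a) m d hd (by rw [he]; exact h5)
  have h10 : d = A.inv (A.add (A.inv a) m) :=
    A.inv_unique _ _ h8 (by rw [← h9, he, ← h6])
  rw [← h10]
  exact ⟨hd, he⟩

/-- (Self-adjointness law) In a lattice effect algebra, if a⊗b ≤ c' then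
a⊗c ≤ b'. -/
theorem self_adjointness (A : LatticeEffectAlgebra E) (a b c : E)
    (h : A.sprod a b ≤ A.inv c) : A.sprod a c ≤ A.inv b := by
  unfold LatticeEffectAlgebra.sprod at *
  obtain ⟨h1, h2⟩ := LEA_key A a (a ⊓ A.inv b) inf_le_left
  obtain ⟨h3, h4⟩ := LEA_key A a (a ⊓ A.inv c) inf_le_left
  generalize A.inv (A.add (A.inv a) (a ⊓ A.inv b)) = x at *
  generalize A.inv (A.add (A.inv a) (a ⊓ A.inv c)) = y at *
  obtain ⟨h5, h6⟩ := A.comm _ _ h1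
  obtain ⟨h7, h8⟩ := A.comm _ _ h3
  have hx : x ≤ a := (A.le_iff _ _).2 ⟨_, h5, h6.symm.trans h2⟩
  obtain ⟨z, hz, hn⟩ := (A.le_iff _ _).1 (le_inf hx h)
  obtain ⟨hz1, hz2⟩ := A.comm _ _ hz
  have hn2 := hz2.symm.trans hn
  obtain ⟨g1, g2, g3⟩ := A.assoc y z x hz1 (by rw [hn2]; exact h7)
  have g4 : A.add y z = a ⊓ A.inv b := by
    apply LEA_cancel A _ _ x g2 h1
    rw [← g3, hn2, ← h8, h4, h2]
  exact ((A.le_iff _ _).2 ⟨z, g1, g4⟩).trans inf_le_right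
end

section
/- In a lattice effect algebra E, for all a,b ∈ E: a∧b = a⊗(a→ₛb) = b⊗(b→ₛa) = (a→ₛ(a→ₛb)')' = (b→ₛ(b→ₛa)')'. -/
variable {E : Type*} [Lattice E] [BoundedOrder E]

theorem LatticeEffectAlgebra.aux (A : LatticeEffectAlgebra E) (a c d : E) (h : A.D c d)
    (e : A.add c d = a) : d = A.inv (A.add (A.inv a) c) := by
  subst e
  obtain ⟨h1, h2⟩ := A.comm _ _ (A.D_inv (A.add c d))
  obtain ⟨_, h4, h5⟩ := A.assoc _ _ _ h h1
  refine A.inv_unique _ _ h4 ?_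
  rw [← h5, ← h2, A.add_inv]

theorem LatticeEffectAlgebra.key (A : LatticeEffectAlgebra E) (a c : E) (h : c ≤ a) :
    c = A.inv (A.add (A.inv a) (a ⊓ A.inv (A.add (A.inv a) c))) := by
  obtain ⟨d, hd, e⟩ := (A.le_iff _ _).1 h
  obtain ⟨hd', e'⟩ := A.comm _ _ hd
  have hle : d ≤ a := (A.le_iff _ _).2 ⟨c, hd', e' ▸ e⟩
  rw [← A.aux a c d hd e, inf_eq_right.2 hle]
  exact A.aux a d c hd' (e' ▸ e)

/-- In a lattice effect algebra,
a∧b = a⊗(a→ₛb) = b⊗(b→ₛa) = (a→ₛ(a→ₛb)')' = (b→ₛ(b→ₛa)')'. -/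
theorem inf_eq_sasaki (A : LatticeEffectAlgebra E) (a b : E) :
    a ⊓ b = A.sprod a (A.sarrow a b) ∧
    a ⊓ b = A.sprod b (A.sarrow b a) ∧
    a ⊓ b = A.inv (A.sarrow a (A.inv (A.sarrow a b))) ∧
    a ⊓ b = A.inv (A.sarrow b (A.inv (A.sarrow b a))) := by
  have h1 := A.key a (a ⊓ b) inf_le_left
  have h2 := A.key b (b ⊓ a) inf_le_left
  have h3 : a ⊓ b = b ⊓ a := inf_comm a b
  exact ⟨h1, h3.trans h2, h1, h3.trans h2⟩
end
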